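/- In the K3 lattice L_{K3} = E8 ⊕ E8 ⊕ U ⊕ U ⊕ U of rank 22, there exists a primitive sublattice M (a ℤ-submodule with torsion-free quotient L_{K3}/M) of rank 11 such that M with the restricted form is isometric to ⟨2⟩ ⊕ ⟨-2⟩^{⊕10}, and the orthogonal complement M^⊥ = {x ∈ L_{K3} : x·m = 0 for all m ∈ M} with the restricted form is isometric to ⟨2⟩ ⊕ U(2) ⊕ E8(2). -/

import Mathlib

/-!
The coordinates of the K3 lattice split into two halves exchanged by the involution that swaps the
two copies of `E8`, two of the copies of `U`, and the two basis vectors of the third `U`.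
In these halves the Gram matrix is `[[A, B], [B, A]]`, so the vectors `(x, x)` form a copy of
`2(A + B)`, the vectors `(x, -x)` a copy of `2(A - B)`, and the two sublattices are orthogonal
complements of each other. Here `A + B = ⟨1⟩ ⊕ U ⊕ E8`, while `A - B = ⟨-1⟩ ⊕ U ⊕ E8` is odd,
unimodular and of signature `(1, 10)`, hence isometric to `⟨1⟩ ⊕ ⟨-1⟩^{⊕10}`.
-/

open Matrix

/-- The hyperbolic plane `U`, with Gram matrix `[[0,1],[1,0]]`. -/
abbrev latU : Matrix (Fin 2) (Fin 2) ℤ := !![0, 1; 1, 0]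

/-- The negative definite even unimodular lattice `E₈` (negative of the Cartan matrix). -/
abbrev latE8 : Matrix (Fin 8) (Fin 8) ℤ :=
  !![-2,  0,  1,  0,  0,  0,  0,  0;
      0, -2,  0,  1,  0,  0,  0,  0;
      1,  0, -2,  1,  0,  0,  0,  0;
      0,  1,  1, -2,  1,  0,  0,  0;
      0,  0,  0,  1, -2,  1,  0,  0;
      0,  0,  0,  0,  1, -2,  1,  0;
      0,  0,  0,  0,  0,  1, -2,  1;
      0,  0,  0,  0,  0,  0,  1, -2]

/-- Orthogonal direct sum of two lattices (block-diagonal Gram matrix). -/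
def dsum {a b : ℕ} (A : Matrix (Fin a) (Fin a) ℤ) (B : Matrix (Fin b) (Fin b) ℤ) :
    Matrix (Fin (a + b)) (Fin (a + b)) ℤ :=
  Matrix.reindex finSumFinEquiv finSumFinEquiv (Matrix.fromBlocks A 0 0 B)

/-- The bilinear form of the lattice with Gram matrix `G` : `x ⋅ y = xᵀ G y`. -/
def bform {n : ℕ} (G : Matrix (Fin n) (Fin n) ℤ) (x y : Fin n → ℤ) : ℤ :=
  x ⬝ᵥ G.mulVec y


/-- The K3 lattice `L_{K3} = E8 ⊕ E8 ⊕ U ⊕ U ⊕ U` of rank 22. -/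
def gramK3 : Matrix (Fin 22) (Fin 22) ℤ :=
  dsum latE8 (dsum latE8 (dsum latU (dsum latU latU)))

/-- `M = ⟨2⟩ ⊕ ⟨-2⟩^{⊕10}`, the Gram matrix `diag(2,-2,…,-2)` of rank 11. -/
def gramM : Matrix (Fin 11) (Fin 11) ℤ :=
  Matrix.diagonal ![2, -2, -2, -2, -2, -2, -2, -2, -2, -2, -2]

/-- `N = ⟨2⟩ ⊕ U(2) ⊕ E8(2)`. -/
def gramN : Matrix (Fin 11) (Fin 11) ℤ := dsum (dsum !![(2 : ℤ)] (2 • latU)) (2 • latE8)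

section General

variable {R V W m n l : Type*}

theorem mem_ker_of_smul_mem_ker [Semiring R] [IsDomain R] [AddCommMonoid V] [AddCommMonoid W]
    [Module R V] [Module R W] [Module.IsTorsionFree R W] (f : V →ₗ[R] W) {c : R} (hc : c ≠ 0)
    {x : V} (hx : c • x ∈ LinearMap.ker f) : x ∈ LinearMap.ker f := by
  simpa [hc] using hx

theorem mulVec_dotProduct_mulVec_mulVec [CommSemiring R] [Fintype m] [Fintype n]
    (G : Matrix m m R) (P : Matrix m n R) (x y : n → R) :
    (P *ᵥ x) ⬝ᵥ G *ᵥ (P *ᵥ y) = x ⬝ᵥ (Pᵀ * G * P) *ᵥ y := by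
  rw [← mulVec_mulVec, ← mulVec_mulVec, dotProduct_mulVec x, vecMul_transpose]

theorem dotProduct_mulVec_eq_of_submatrix_eq_fromBlocks [NonUnitalNonAssocSemiring R]
    [Fintype m] [Fintype n] [Fintype l] {φ : n ⊕ l ≃ m} {G : Matrix m m R} {A : Matrix n n R}
    {B : Matrix n l R} {C : Matrix l n R} {D : Matrix l l R}
    (hG : G.submatrix φ φ = fromBlocks A B C D) (z w : m → R) :
    z ⬝ᵥ G *ᵥ w =
      (z ∘ φ ∘ Sum.inl) ⬝ᵥ (A *ᵥ (w ∘ φ ∘ Sum.inl) + B *ᵥ (w ∘ φ ∘ Sum.inr)) +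
        (z ∘ φ ∘ Sum.inr) ⬝ᵥ (C *ᵥ (w ∘ φ ∘ Sum.inl) + D *ᵥ (w ∘ φ ∘ Sum.inr)) := by
  calc z ⬝ᵥ G *ᵥ w = (z ∘ φ) ⬝ᵥ (G *ᵥ w) ∘ φ := (comp_equiv_dotProduct_comp_equiv ..).symm
    _ = (z ∘ φ) ⬝ᵥ fromBlocks A B C D *ᵥ (w ∘ φ) := by
      rw [← hG, submatrix_mulVec_equiv, Function.comp_assoc w, φ.self_comp_symm, Function.comp_id]
    _ = _ := by
      rw [fromBlocks_mulVec, ← Sum.elim_comp_inl_inr (z ∘ φ), sumElim_dotProduct_sumElim]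
      rfl

end General

section SwapEigenmodule

variable {m n R : Type*} [CommRing R] (φ : n ⊕ n ≃ m) (ε : ℤˣ)

variable (R) in
/-- The `ε`-eigenmodule of the involution of `m → R` that exchanges the coordinates `φ (inl i)` and
`φ (inr i)`. -/
def swapEigenmodule : Submodule R (m → R) :=
  LinearMap.ker (LinearMap.funLeft R R (φ ∘ Sum.inr) - ε • LinearMap.funLeft R R (φ ∘ Sum.inl))

namespace swapEigenmodule

variable {φ ε}

theorem mem_iff {z : m → R} :
    z ∈ swapEigenmodule R φ ε ↔ z ∘ φ ∘ Sum.inr = ε • (z ∘ φ ∘ Sum.inl) :=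
  LinearMap.mem_ker.trans sub_eq_zero

theorem mem_neg_iff {z : m → R} :
    z ∈ swapEigenmodule R φ (-ε) ↔ z ∘ φ ∘ Sum.inl + ε • (z ∘ φ ∘ Sum.inr) = 0 := by
  rw [mem_iff]
  obtain rfl | rfl := Int.units_eq_one_or ε
  · simp [add_eq_zero_iff_eq_neg']
  · simp [← sub_eq_add_neg, sub_eq_zero, eq_comm]

theorem mem_of_smul_mem [IsDomain R] {c : R} (hc : c ≠ 0) {z : m → R}
    (hz : c • z ∈ swapEigenmodule R φ ε) : z ∈ swapEigenmodule R φ ε :=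
  mem_ker_of_smul_mem_ker _ hc hz

variable (φ ε) in
/-- The coordinates of an element of `swapEigenmodule R φ ε`: its restriction to the first half. -/
def equivFun : swapEigenmodule R φ ε ≃ₗ[R] (n → R) where
  toFun z := z.1 ∘ φ ∘ Sum.inl
  map_add' _ _ := rfl
  map_smul' _ _ := rfl
  invFun x := ⟨Sum.elim x (ε • x) ∘ φ.symm, mem_iff.mpr (by ext; simp)⟩
  left_inv z := by
    ext j
    obtain ⟨i | i, rfl⟩ := φ.surjective j
    · simp
    · simpa using (congrFun (mem_iff.mp z.2) i).symm
  right_inv x := by ext; simp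

variable [Fintype m] {G : Matrix m m R} {A B : Matrix n n R}

theorem dotProduct_mulVec_eq [Fintype n] (hG : G.submatrix φ φ = fromBlocks A B B A) (z : m → R)
    (w : swapEigenmodule R φ ε) :
    z ⬝ᵥ G *ᵥ w = (z ∘ φ ∘ Sum.inl + ε • (z ∘ φ ∘ Sum.inr)) ⬝ᵥ (A + ε • B) *ᵥ equivFun φ ε w := by
  set u := equivFun φ ε w
  have hA : A *ᵥ u + B *ᵥ (ε • u) = (A + ε • B) *ᵥ u := by
    rw [add_mulVec, smul_mulVec, mulVec_smul]
  have hB : B *ᵥ u + A *ᵥ (ε • u) = ε • (A + ε • B) *ᵥ u := by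
    rw [add_mulVec, smul_mulVec, smul_add, smul_smul, Int.units_mul_self, one_smul, mulVec_smul,
      add_comm]
  have hu : (w : m → R) ∘ φ ∘ Sum.inl = u := rfl
  rw [dotProduct_mulVec_eq_of_submatrix_eq_fromBlocks hG, mem_iff.mp w.2, hu, hA, hB,
    add_dotProduct, smul_dotProduct, dotProduct_smul]

theorem dotProduct_mulVec_eq_equivFun [Fintype n]
    (hG : G.submatrix φ φ = fromBlocks A B B A) (z w : swapEigenmodule R φ ε) :
    (z : m → R) ⬝ᵥ G *ᵥ w = equivFun φ ε z ⬝ᵥ (2 • (A + ε • B)) *ᵥ equivFun φ ε w := by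
  have hz : (z : m → R) ∘ φ ∘ Sum.inl + ε • ((z : m → R) ∘ φ ∘ Sum.inr) = 2 • equivFun φ ε z := by
    rw [mem_iff.mp z.2, smul_smul, Int.units_mul_self, one_smul, two_smul]
    rfl
  rw [dotProduct_mulVec_eq hG, hz, smul_dotProduct, smul_mulVec, dotProduct_smul]

theorem mem_neg_iff_forall_dotProduct_eq_zero [Finite n]
    (hG : G.submatrix φ φ = fromBlocks A B B A) (hAB : (A + ε • B).SeparatingLeft) {z : m → R} :
    z ∈ swapEigenmodule R φ (-ε) ↔ ∀ w ∈ swapEigenmodule R φ ε, z ⬝ᵥ G *ᵥ w = 0 := by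
  cases nonempty_fintype n
  rw [mem_neg_iff]
  constructor
  · intro hz w hw
    rw [dotProduct_mulVec_eq hG z ⟨w, hw⟩, hz, zero_dotProduct]
  · refine fun hz ↦ separatingLeft_def.mp hAB _ fun x ↦ ?_
    obtain ⟨w, rfl⟩ := (equivFun φ ε).surjective x
    rw [← dotProduct_mulVec_eq hG, hz w w.2]

end swapEigenmodule

end SwapEigenmodule

/-- The two halves of the coordinates of the K3 lattice, each listed in the order `1 + 2 + 8` of
`⟨±1⟩ ⊕ U ⊕ E8`: one basis vector of the last `U`, one of the first two copies of `U`, one copy of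
`E8`. -/
noncomputable def k3Halves : Fin 11 ⊕ Fin 11 ≃ Fin 22 :=
  Equiv.ofBijective
    (Sum.elim ![20, 16, 17, 0, 1, 2, 3, 4, 5, 6, 7] ![21, 18, 19, 8, 9, 10, 11, 12, 13, 14, 15])
    (by decide +kernel)

/-- The Gram matrix of each half of the K3 lattice. -/
def halfGram : Matrix (Fin 11) (Fin 11) ℤ := dsum (dsum !![0] latU) latE8

/-- The matrix of products between the two halves of the K3 lattice: they only meet in the last
`U`. -/
def crossGram : Matrix (Fin 11) (Fin 11) ℤ :=
  dsum (dsum !![1] (0 : Matrix (Fin 2) (Fin 2) ℤ)) (0 : Matrix (Fin 8) (Fin 8) ℤ)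

theorem gramK3_submatrix_k3Halves :
    gramK3.submatrix k3Halves k3Halves = fromBlocks halfGram crossGram crossGram halfGram := by
  decide +kernel

theorem two_smul_halfGram_add_crossGram : 2 • (halfGram + crossGram) = gramN := by
  decide +kernel

/-- A basis of `⟨1⟩ ⊕ ⟨-1⟩^{⊕10}` splitting it as `⟨-1⟩ ⊕ U ⊕ E8`, as the columns of a matrix.
If `h, e₁, …, e₁₀` is the standard basis and `f = 3h - e₁ - ⋯ - e₉`, an isotropic vector, then
`⟨-1⟩` is spanned by `f - e₁₀` and `U` by `f, f + e₉ - e₁₀`, while `E8` has the simple roots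
`eᵢ - eᵢ₊₁` for `i ≤ 7` and, in second position, `h - e₁ - e₂ - e₃`. -/
def splitBasis : Matrix (Fin 11) (Fin 11) ℤ :=
  !![3, -1, -1, -1, -1, -1, -1, -1, -1, -1, -1;
     3, -1, -1, -1, -1, -1, -1, -1, -1, -1,  0;
     3, -1, -1, -1, -1, -1, -1, -1, -1,  0, -1;
     0,  1, -1,  0,  0,  0,  0,  0,  0,  0,  0;
     1, -1, -1, -1,  0,  0,  0,  0,  0,  0,  0;
     0,  0,  1, -1,  0,  0,  0,  0,  0,  0,  0;
     0,  0,  0,  1, -1,  0,  0,  0,  0,  0,  0;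
     0,  0,  0,  0,  1, -1,  0,  0,  0,  0,  0;
     0,  0,  0,  0,  0,  1, -1,  0,  0,  0,  0;
     0,  0,  0,  0,  0,  0,  1, -1,  0,  0,  0;
     0,  0,  0,  0,  0,  0,  0,  1, -1,  0,  0]ᵀ

/-- The coordinates of `h, e₁, …, e₁₀` in the basis `splitBasis`, as the columns of a matrix. -/
def splitBasisInv : Matrix (Fin 11) (Fin 11) ℤ :=
  !![-3, 3, 3, -5, -8, -10, -15, -12, -9, -6, -3;
     -1, 1, 1, -1, -3,  -3,  -5,  -4, -3, -2, -1;
     -1, 1, 1, -2, -3,  -3,  -5,  -4, -3, -2, -1;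
     -1, 1, 1, -2, -3,  -4,  -5,  -4, -3, -2, -1;
     -1, 1, 1, -2, -3,  -4,  -6,  -4, -3, -2, -1;
     -1, 1, 1, -2, -3,  -4,  -6,  -5, -3, -2, -1;
     -1, 1, 1, -2, -3,  -4,  -6,  -5, -4, -2, -1;
     -1, 1, 1, -2, -3,  -4,  -6,  -5, -4, -3, -1;
     -1, 1, 1, -2, -3,  -4,  -6,  -5, -4, -3, -2;
     -1, 0, 1,  0,  0,   0,   0,   0,  0,  0,  0;
     -1, 1, 0,  0,  0,   0,   0,   0,  0,  0,  0]ᵀ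

theorem splitBasis_mul_splitBasisInv : splitBasis * splitBasisInv = 1 := by
  decide +kernel

theorem splitBasis_transpose_mul_gramM_mul :
    splitBasisᵀ * gramM * splitBasis = 2 • (halfGram + (-1 : ℤˣ) • crossGram) := by
  decide +kernel

theorem separatingLeft_halfGram_sub_crossGram :
    (halfGram + (-1 : ℤˣ) • crossGram).SeparatingLeft := by
  refine (nondegenerate_of_det_ne_zero fun hdet ↦ ?_).separatingLeft
  have hP : splitBasis.det ≠ 0 := (isUnit_det_of_right_inverse splitBasis_mul_splitBasisInv).ne_zero
  have hM : gramM.det ≠ 0 := by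
    rw [gramM, det_diagonal]
    decide
  have hPMP : splitBasis.det * gramM.det * splitBasis.det = 0 := by
    calc splitBasis.det * gramM.det * splitBasis.det
        = (splitBasisᵀ * gramM * splitBasis).det := by rw [det_mul, det_mul, det_transpose]
      _ = 0 := by
        rw [splitBasis_transpose_mul_gramM_mul, ← Nat.cast_smul_eq_nsmul ℤ, det_smul, hdet,
          mul_zero]
  simp [hP, hM] at hPMP

/-- The isometry of `⟨-2⟩ ⊕ U(2) ⊕ E8(2)` with `⟨2⟩ ⊕ ⟨-2⟩^{⊕10}` given by `splitBasis`. -/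
def splitBasisEquiv : (Fin 11 → ℤ) ≃ₗ[ℤ] (Fin 11 → ℤ) :=
  toLin'OfInv (mul_eq_one_comm.mp splitBasis_mul_splitBasisInv) splitBasis_mul_splitBasisInv

theorem bform_gramM_splitBasisEquiv (x y : Fin 11 → ℤ) :
    bform gramM (splitBasisEquiv x) (splitBasisEquiv y) =
      x ⬝ᵥ (2 • (halfGram + (-1 : ℤˣ) • crossGram)) *ᵥ y := by
  rw [← splitBasis_transpose_mul_gramM_mul, ← mulVec_dotProduct_mulVec_mulVec]
  rfl

/-- There is a primitive rank-11 sublattice `M` of the K3 lattice isometric to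
`⟨2⟩ ⊕ ⟨-2⟩^{⊕10}` whose orthogonal complement `M^⊥` is isometric to `⟨2⟩ ⊕ U(2) ⊕ E8(2)`. -/
theorem exists_primitive_coble_in_K3 :
    ∃ M : Submodule ℤ (Fin 22 → ℤ),
      (∀ c : ℤ, c ≠ 0 → ∀ x, c • x ∈ M → x ∈ M) ∧
      (∃ e : M ≃ₗ[ℤ] (Fin 11 → ℤ),
        ∀ x y : M, bform gramM (e x) (e y) = bform gramK3 x y) ∧
      ∃ W : Submodule ℤ (Fin 22 → ℤ),
        (∀ x, x ∈ W ↔ ∀ m ∈ M, bform gramK3 x m = 0) ∧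
        ∃ f : W ≃ₗ[ℤ] (Fin 11 → ℤ),
          ∀ x y : W, bform gramN (f x) (f y) = bform gramK3 x y := by
  have hG := gramK3_submatrix_k3Halves
  have form_eq (ε : ℤˣ) (x y : swapEigenmodule ℤ k3Halves ε) :=
    swapEigenmodule.dotProduct_mulVec_eq_equivFun hG x y
  refine ⟨swapEigenmodule ℤ k3Halves (-1), fun c hc x ↦ swapEigenmodule.mem_of_smul_mem hc,
    ⟨swapEigenmodule.equivFun k3Halves (-1) ≪≫ₗ splitBasisEquiv, fun x y ↦ ?_⟩,
    swapEigenmodule ℤ k3Halves 1, fun x ↦ ?_, swapEigenmodule.equivFun k3Halves 1, fun x y ↦ ?_⟩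
  · exact (bform_gramM_splitBasisEquiv _ _).trans (form_eq (-1) x y).symm
  · exact swapEigenmodule.mem_neg_iff_forall_dotProduct_eq_zero hG
      separatingLeft_halfGram_sub_crossGram
  · rw [← two_smul_halfGram_add_crossGram, ← one_smul ℤˣ crossGram]
    exact (form_eq 1 x y).symm
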